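/- Let d ≥ 1 and 0 < r < 1, and let a be a symbol of class S⁰_ph on ℝ^d. Set γ = r/(r + 1 + d/2). There exists a constant C, depending only on d, r and a, such that for every Schwartz function f on ℝ^d with [f]_{−1} := ((2π)^{−d} ∫_{ℝ^d} |κ|^{−2} |f̂(κ)|² dκ)^{1/2} < ∞ one has ‖𝔞[f]‖_{L^∞} ≤ C · [f]_{−1}^{γ} · {f}_r^{1−γ}. -/

import Mathlib

open MeasureTheory ENNReal
open scoped RealInnerProductSpace

noncomputable section

/-- Shorthand for Euclidean space `ℝ^d`. -/
abbrev Ed (d : ℕ) := EuclideanSpace ℝ (Fin d)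

/-- The homogeneous Besov (Gagliardo) seminorm `[f]_{r,p}`. -/
def gagliardo (d : ℕ) (r p : ℝ) {F : Type*} [NormedAddCommGroup F] (f : Ed d → F) : ℝ≥0∞ :=
  (∫⁻ x, ∫⁻ y, (‖f x - f y‖₊ : ℝ≥0∞) ^ p / (‖x - y‖₊ : ℝ≥0∞) ^ (r * p + d)) ^ (1 / p)

/-- The homogeneous Hölder seminorm `{f}_r`. -/
def holderSemi (d : ℕ) (r : ℝ) {F : Type*} [NormedAddCommGroup F] (f : Ed d → F) : ℝ≥0∞ :=
  ⨆ x, ⨆ y, (‖f x - f y‖₊ : ℝ≥0∞) / (‖x - y‖₊ : ℝ≥0∞) ^ r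

/-- The Fourier transform `f̂(κ) = ∫ e^{-i x·κ} f(x) dx`. -/
def ftransform (d : ℕ) (f : Ed d → ℂ) (κ : Ed d) : ℂ :=
  ∫ x, Complex.exp (-(Complex.I * (⟪x, κ⟫ : ℂ))) * f x

/-- The homogeneous Sobolev seminorm `[f]_θ = ((2π)^{-d} ∫ |κ|^{2θ} |f̂(κ)|² dκ)^{1/2}`. -/
def sobolevSemi (d : ℕ) (θ : ℝ) (f : Ed d → ℂ) : ℝ≥0∞ :=
  (ENNReal.ofReal ((2 * Real.pi) ^ (-(d : ℝ))) *
    ∫⁻ κ, (‖κ‖₊ : ℝ≥0∞) ^ (2 * θ) * (‖ftransform d f κ‖₊ : ℝ≥0∞) ^ (2 : ℕ)) ^ ((1 : ℝ) / 2)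

/-- A symbol of class `S⁰_{ph}`: smooth away from the origin and positively
homogeneous of degree `0`. -/
def IsSymbol0 (d : ℕ) (a : Ed d → ℂ) : Prop :=
  ContDiffOn ℝ (⊤ : ℕ∞) a {0}ᶜ ∧ ∀ (c : ℝ) (κ : Ed d), 0 < c → κ ≠ 0 → a (c • κ) = a κ

/-- The operator `𝔞[f](x) = (2π)^{-d} ∫ e^{i x·κ} a(κ) f̂(κ) dκ` associated with a symbol. -/
def symbOp (d : ℕ) (a : Ed d → ℂ) (f : Ed d → ℂ) (x : Ed d) : ℂ :=
  (((2 * Real.pi) ^ (-(d : ℝ)) : ℝ) : ℂ) *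
    ∫ κ, Complex.exp (Complex.I * (⟪x, κ⟫ : ℂ)) * a κ * ftransform d f κ

/-- The partial derivative `∂_i f(x)`. -/
def pd (d : ℕ) (i : Fin d) (f : Ed d → ℝ) (x : Ed d) : ℝ :=
  fderiv ℝ f x (EuclideanSpace.single i 1)

/-- The half-wave propagator `(e^{itD} g)(x) = (2π)^{-d} ∫ e^{i x·κ} e^{i t|κ|} ĝ(κ) dκ`. -/
def halfWave (d : ℕ) (t : ℝ) (g : Ed d → ℂ) (x : Ed d) : ℂ :=
  (((2 * Real.pi) ^ (-(d : ℝ)) : ℝ) : ℂ) *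
    ∫ κ, Complex.exp (Complex.I * ((⟪x, κ⟫ : ℂ) + (t : ℂ) * ((‖κ‖ : ℝ) : ℂ))) *
      ftransform d g κ

end


open scoped FourierTransform

lemma ft_eq (d : ℕ) (f : Ed d → ℂ) (κ : Ed d) :
    ftransform d f κ = 𝓕 f ((2 * Real.pi)⁻¹ • κ) := by
  rw [ftransform, Real.fourier_eq']
  congr 1
  ext v
  rw [smul_eq_mul, inner_smul_right]
  congr 2
  have : (Real.pi : ℂ) ≠ 0 := by exact_mod_cast Real.pi_ne_zero
  push_cast
  field_simp

lemma fourier_rescale (d : ℕ) (f : Ed d → ℂ) (x η : Ed d) (l : ℝ) (hl : 0 < l) :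
    𝓕 (fun y => f (x + l⁻¹ • y)) η
      = ((l ^ d : ℝ) : ℂ) * (Complex.exp (2 * Real.pi * l * (⟪x, η⟫ : ℂ) * Complex.I) * 𝓕 f (l • η)) := by
  rw [Real.fourier_eq', Real.fourier_eq']
  have h1 := Measure.integral_comp_inv_smul (volume : Measure (Ed d))
    (fun z => Complex.exp (((-2 * Real.pi * ⟪l • z, η⟫ : ℝ) : ℂ) * Complex.I) • f (x + z)) l
  have h2 : ∀ z : Ed d, l • l⁻¹ • z = z := fun z => smul_inv_smul₀ hl.ne' z
  simp only [h2] at h1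
  rw [h1]
  have h3 := integral_add_left_eq_self (μ := (volume : Measure (Ed d)))
    (fun z => Complex.exp (((-2 * Real.pi * ⟪l • (z - x), η⟫ : ℝ) : ℂ) * Complex.I) • f z) x
  simp only [add_sub_cancel_left] at h3
  rw [h3, finrank_euclideanSpace_fin, abs_of_pos (by positivity), ← integral_const_mul]
  rw [Complex.real_smul]
  congr 2
  ext z
  rw [smul_eq_mul, smul_eq_mul, ← mul_assoc, ← Complex.exp_add]
  congr 2
  rw [inner_smul_left, inner_smul_right, inner_sub_left]
  push_cast
  simp
  ring

lemma key_eq (d : ℕ) (f : Ed d → ℂ) (hf : Integrable f) (M : SchwartzMap (Ed d) ℂ) (x : Ed d)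
    (l : ℝ) (hl : 0 < l) (hM : M 0 = 0) :
    (((2 * Real.pi) ^ (-(d : ℝ)) : ℝ) : ℂ) *
      ∫ κ, Complex.exp (Complex.I * (⟪x, κ⟫ : ℂ)) * M ((2 * Real.pi * l)⁻¹ • κ) * ftransform d f κ
    = ∫ y, 𝓕 M y * (f (x + l⁻¹ • y) - f x) := by
  have hpi := Real.pi_pos
  have h1 := Measure.integral_comp_inv_smul (volume : Measure (Ed d))
    (fun η => Complex.exp (Complex.I * (⟪x, (2 * Real.pi * l) • η⟫ : ℂ)) * M η *
       𝓕 f (l • η)) (2 * Real.pi * l)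
  have h2 : ∀ z : Ed d, (2 * Real.pi * l) • (2 * Real.pi * l)⁻¹ • z = z :=
    fun z => smul_inv_smul₀ (by positivity) z
  have h2' : ∀ z : Ed d, l • (2 * Real.pi * l)⁻¹ • z = (2 * Real.pi)⁻¹ • z := by
    intro z
    rw [smul_smul]; congr 1; field_simp
  simp only [h2, h2'] at h1
  simp only [ft_eq]
  rw [h1, finrank_euclideanSpace_fin, abs_of_pos (by positivity), Complex.real_smul, ← mul_assoc,
    ← Complex.ofReal_mul]
  have h3 : (2 * Real.pi) ^ (-(d : ℝ)) * (2 * Real.pi * l) ^ d = l ^ d := by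
    rw [Real.rpow_neg (by positivity), Real.rpow_natCast, mul_pow (2 * Real.pi) l]
    field_simp
  rw [h3, ← integral_const_mul]
  have hfs : Integrable (fun y => f (x + l⁻¹ • y)) :=
    (hf.comp_add_left x).comp_smul (inv_ne_zero hl.ne')
  have h4 : ∀ η : Ed d, ((l ^ d : ℝ) : ℂ) * (Complex.exp (Complex.I * (⟪x, (2 * Real.pi * l) • η⟫ : ℂ)) * M η *
       𝓕 f (l • η)) = M η * 𝓕 (fun y => f (x + l⁻¹ • y)) η := by
    intro η
    rw [fourier_rescale d f x η l hl, inner_smul_right]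
    have : Complex.I * ((2 * Real.pi * l * ⟪x, η⟫ : ℝ) : ℂ) = 2 * Real.pi * l * (⟪x, η⟫ : ℂ) * Complex.I := by
      push_cast; ring
    rw [this]; ring
  simp only [h4]
  have h5 : ∫ y, 𝓕 (⇑M) y * f (x + l⁻¹ • y) = ∫ η, M η * 𝓕 (fun y => f (x + l⁻¹ • y)) η := by
    have := VectorFourier.integral_fourierIntegral_smul_eq_flip (μ := (volume : Measure (Ed d)))
      (ν := (volume : Measure (Ed d))) (e := Real.fourierChar) (L := innerₗ (Ed d))
      Real.continuous_fourierChar continuous_inner M.integrable hfs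
    simp only [flip_innerₗ, smul_eq_mul] at this
    exact this
  rw [← h5]
  have hi0 : Integrable (fun y => 𝓕 (⇑M) y) := by
    rw [← SchwartzMap.fourier_coe]; exact (𝓕 M).integrable
  have h6 : ∫ y, 𝓕 (⇑M) y = 0 := by
    have := M.continuous.fourierInv_fourier_eq M.integrable hi0
    have := congrFun this 0
    rw [Real.fourierInv_eq', hM] at this
    simpa using this
  have hi1 : Integrable (fun y => 𝓕 (⇑M) y * f (x + l⁻¹ • y)) := by
    refine hfs.bdd_mul (c := ∫ v, ‖M v‖) hi0.aestronglyMeasurable (Filter.Eventually.of_forall fun y => ?_)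
    exact VectorFourier.norm_fourierIntegral_le_integral_norm _ _ _ _ _
  simp only [mul_sub, SchwartzMap.fourier_coe]
  rw [integral_sub hi1 (hi0.mul_const _), integral_mul_const, h6]
  simp

lemma high_bound (d : ℕ) (r : ℝ) (hr0 : 0 < r) (hr1 : r < 1) (M : SchwartzMap (Ed d) ℂ) (hM : M 0 = 0) :
    ∃ B : ℝ, 0 ≤ B ∧ ∀ (f : Ed d → ℂ), Integrable f → ∀ H : ℝ, 0 ≤ H →
      (∀ x y, ‖f x - f y‖ ≤ H * ‖x - y‖ ^ r) → ∀ x (l : ℝ), 0 < l →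
    ‖(((2 * Real.pi) ^ (-(d : ℝ)) : ℝ) : ℂ) *
      ∫ κ, Complex.exp (Complex.I * (⟪x, κ⟫ : ℂ)) * M ((2 * Real.pi * l)⁻¹ • κ) * ftransform d f κ‖
    ≤ B * l ^ (-r) * H := by
  have hint : Integrable (fun y => ‖𝓕 M y‖ * ‖y‖ ^ r) := by
    refine Integrable.mono' ((𝓕 M).integrable.norm.add ((𝓕 M).integrable_pow_mul volume 1)) ?_ ?_
    · refine ((𝓕 M).continuous.norm.mul ?_).aestronglyMeasurable
      exact continuous_norm.rpow_const (fun _ => Or.inr hr0.le)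
    · refine Filter.Eventually.of_forall fun y => ?_
      have h0 : ‖y‖ ^ r ≤ 1 + ‖y‖ := by
        rcases le_total ‖y‖ 1 with h | h
        · have := Real.rpow_le_one (norm_nonneg y) h hr0.le
          linarith [norm_nonneg y]
        · have := Real.rpow_le_rpow_of_exponent_le h hr1.le
          rw [Real.rpow_one] at this
          linarith
      rw [Real.norm_of_nonneg (by positivity)]
      simp only [Pi.add_apply, pow_one]
      nlinarith [norm_nonneg (𝓕 M y)]
  refine ⟨∫ y, ‖𝓕 M y‖ * ‖y‖ ^ r, integral_nonneg fun y => by positivity, ?_⟩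
  intro f hf H hH hfH x l hl
  rw [key_eq d f hf M x l hl hM]
  have : (∫ y, ‖𝓕 M y‖ * ‖y‖ ^ r) * l ^ (-r) * H = ∫ y, (‖𝓕 M y‖ * ‖y‖ ^ r) * (l ^ (-r) * H) := by
    rw [integral_mul_const]; ring
  rw [this]
  refine norm_integral_le_of_norm_le (hint.mul_const _) (Filter.Eventually.of_forall fun y => ?_)
  rw [norm_mul]
  have h := hfH (x + l⁻¹ • y) x
  rw [add_sub_cancel_left, norm_smul, Real.norm_of_nonneg (by positivity),
    Real.mul_rpow (by positivity) (by positivity), Real.inv_rpow hl.le, ← Real.rpow_neg hl.le] at h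
  calc _ ≤ ‖𝓕 M y‖ * (H * (l ^ (-r) * ‖y‖ ^ r)) := by gcongr
    _ = _ := by ring

lemma optimize (L A B K₁ K₂ r s : ℝ) (hA : 0 ≤ A) (hB : 0 ≤ B) (hK₁ : 0 ≤ K₁) (hK₂ : 0 ≤ K₂)
    (hr : 0 < r) (hs : 0 < s)
    (h : ∀ R : ℝ, 0 < R → L ≤ K₁ * R ^ s * A + K₂ * R ^ (-r) * B) :
    L ≤ (K₁ + K₂) * (A ^ (r / (r + s)) * B ^ (1 - r / (r + s))) := by
  have h1 : 1 - r / (r + s) = s / (r + s) := by field_simp; ring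
  rw [h1]
  have hpos : ∀ A' B' : ℝ, 0 < A' → 0 < B' → A ≤ A' → B ≤ B' →
      L ≤ (K₁ + K₂) * (A' ^ (r / (r + s)) * B' ^ (s / (r + s))) := by
    intro A' B' hA' hB' hAA hBB
    have hR : 0 < (B' / A') ^ (1 / (r + s)) := by positivity
    refine (h _ hR).trans ?_
    have e1 : ((B' / A') ^ (1 / (r + s))) ^ s * A' = A' ^ (r / (r + s)) * B' ^ (s / (r + s)) := by
      rw [← Real.rpow_mul (by positivity), Real.div_rpow hB'.le hA'.le]
      have : A' ^ (r / (r + s)) = A' / A' ^ (s / (r + s)) := by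
        rw [_root_.eq_div_iff (by positivity), ← Real.rpow_add hA', ← add_div, div_self (by positivity),
          Real.rpow_one]
      rw [this, one_div_mul_eq_div]
      ring
    have e2 : ((B' / A') ^ (1 / (r + s))) ^ (-r) * B' = A' ^ (r / (r + s)) * B' ^ (s / (r + s)) := by
      rw [← Real.rpow_mul (by positivity), Real.div_rpow hB'.le hA'.le]
      have : B' ^ (s / (r + s)) = B' / B' ^ (r / (r + s)) := by
        rw [_root_.eq_div_iff (by positivity), ← Real.rpow_add hB', ← add_div, add_comm s r,
          div_self (by positivity), Real.rpow_one]
      rw [this, mul_neg, one_div_mul_eq_div, Real.rpow_neg hB'.le, Real.rpow_neg hA'.le]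
      field_simp
    calc _ ≤ K₁ * (((B' / A') ^ (1 / (r + s))) ^ s * A') +
          K₂ * (((B' / A') ^ (1 / (r + s))) ^ (-r) * B') := by
          rw [mul_assoc, mul_assoc]; gcongr
      _ = _ := by rw [e1, e2]; ring
  have hc : Filter.Tendsto (fun ε : ℝ => (K₁ + K₂) * ((A + ε) ^ (r / (r + s)) * (B + ε) ^ (s / (r + s))))
      (nhdsWithin 0 (Set.Ioi 0)) (nhds ((K₁ + K₂) * ((A + 0) ^ (r / (r + s)) * (B + 0) ^ (s / (r + s))))) := by
    refine Filter.Tendsto.mono_left ?_ nhdsWithin_le_nhds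
    refine Continuous.tendsto (f := fun ε : ℝ => (K₁ + K₂) * ((A + ε) ^ (r / (r + s)) * (B + ε) ^ (s / (r + s)))) ?_ 0
    refine continuous_const.mul (Continuous.mul ?_ ?_)
    · exact (continuous_const.add continuous_id).rpow_const fun _ => Or.inr (by positivity)
    · exact (continuous_const.add continuous_id).rpow_const fun _ => Or.inr (by positivity)
  rw [add_zero, add_zero] at hc
  refine ge_of_tendsto hc ?_
  filter_upwards [self_mem_nhdsWithin] with ε hε
  have hε : 0 < ε := hε
  exact hpos _ _ (by positivity) (by positivity) (by linarith) (by linarith)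

lemma symbol_bdd (d : ℕ) (a : Ed d → ℂ) (ha : IsSymbol0 d a) : ∃ A : ℝ, 0 ≤ A ∧ ∀ κ, ‖a κ‖ ≤ A := by
  have hc : ContinuousOn a (Metric.sphere 0 1) := ha.1.continuousOn.mono (by
    intro x hx h
    rw [Set.mem_singleton_iff] at h
    simp [h] at hx)
  obtain ⟨C, hC⟩ := (isCompact_sphere (0 : Ed d) 1).exists_bound_of_continuousOn hc
  refine ⟨max C ‖a 0‖, (norm_nonneg _).trans (le_max_right _ _), fun κ => ?_⟩
  by_cases h : κ = 0
  · rw [h]; exact le_max_right _ _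
  · rw [← ha.2 (‖κ‖⁻¹) κ (by positivity) h]
    refine (hC _ ?_).trans (le_max_left _ _)
    simp [norm_smul, h]

lemma symbol_meas (d : ℕ) (hd : 1 ≤ d) (a : Ed d → ℂ) (ha : IsSymbol0 d a) :
    AEStronglyMeasurable a (volume : Measure (Ed d)) := by
  have : Nonempty (Fin d) := ⟨⟨0, hd⟩⟩
  have h := ha.1.continuousOn.aestronglyMeasurable (μ := (volume : Measure (Ed d)))
    (measurableSet_singleton (0 : Ed d)).compl
  rwa [Measure.restrict_eq_self_of_ae_mem] at h
  rw [ae_iff]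
  simp

lemma ft_cont (d : ℕ) (f : SchwartzMap (Ed d) ℂ) : Continuous (ftransform d f) := by
  have : ftransform d f = fun κ => (𝓕 f) ((2 * Real.pi)⁻¹ • κ) := by
    ext κ; rw [ft_eq, SchwartzMap.fourier_coe]
  rw [this]
  exact (𝓕 f).continuous.comp (continuous_const_smul _)

lemma ft_int (d : ℕ) (f : SchwartzMap (Ed d) ℂ) : Integrable (ftransform d f) := by
  have : ftransform d f = fun κ => (𝓕 f) ((2 * Real.pi)⁻¹ • κ) := by
    ext κ; rw [ft_eq, SchwartzMap.fourier_coe]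
  rw [this]
  exact (𝓕 f).integrable.comp_smul (by have := Real.pi_pos; positivity)

lemma exists_M (d : ℕ) (a : Ed d → ℂ) (ha : IsSymbol0 d a) (χ : ContDiffBump (0 : Ed d)) :
    ∃ M : SchwartzMap (Ed d) ℂ, ∀ η, M η = a η * ((χ ((2 : ℝ)⁻¹ • η) - χ η : ℝ) : ℂ) := by
  have hs : ContDiff ℝ (⊤ : ℕ∞) (fun η => a η * ((χ ((2 : ℝ)⁻¹ • η) - χ η : ℝ) : ℂ)) := by
    rw [contDiff_iff_contDiffAt]
    intro η
    by_cases h : η = 0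
    · subst h
      have e1 : ∀ᶠ η in nhds (0 : Ed d), χ η = 1 := χ.eventuallyEq_one
      have e2 : ∀ᶠ η in nhds (0 : Ed d), χ ((2 : ℝ)⁻¹ • η) = 1 := by
        have : Filter.Tendsto (fun η : Ed d => (2 : ℝ)⁻¹ • η) (nhds 0) (nhds 0) := by
          have := (continuous_const_smul (T := Ed d) (2 : ℝ)⁻¹).tendsto 0
          rwa [smul_zero] at this
        exact this.eventually e1
      have : (fun η => a η * ((χ ((2 : ℝ)⁻¹ • η) - χ η : ℝ) : ℂ)) =ᶠ[nhds 0] fun _ => 0 := by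
        filter_upwards [e1, e2] with η h1 h2
        rw [h1, h2]; simp
      exact contDiffAt_const.congr_of_eventuallyEq this
    · refine ContDiffAt.mul (ha.1.contDiffAt (isOpen_compl_singleton.mem_nhds h)) ?_
      refine Complex.ofRealCLM.contDiff.contDiffAt.comp η ?_
      exact (χ.contDiff.comp (contDiff_const_smul _)).contDiffAt.sub χ.contDiff.contDiffAt
  have hcs : HasCompactSupport (fun η => a η * ((χ ((2 : ℝ)⁻¹ • η) - χ η : ℝ) : ℂ)) := by
    refine HasCompactSupport.mul_left (f' := fun η => ((χ ((2 : ℝ)⁻¹ • η) - χ η : ℝ) : ℂ)) ?_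
    refine HasCompactSupport.comp_left (g := ((↑) : ℝ → ℂ))
      (f := fun η => χ ((2 : ℝ)⁻¹ • η) - χ η) ?_ Complex.ofReal_zero
    refine HasCompactSupport.sub ?_ χ.hasCompactSupport
    exact χ.hasCompactSupport.comp_smul (by norm_num)
  exact ⟨hcs.toSchwartzMap hs, fun η => rfl⟩

lemma low_bound (d : ℕ) (hd : 1 ≤ d) (A : ℝ) (hA : 0 ≤ A) :
    ∃ K : ℝ, 0 ≤ K ∧ ∀ (f : SchwartzMap (Ed d) ℂ) (m : Ed d → ℂ) (ρ : ℝ), 0 < ρ → (∀ κ, ‖m κ‖ ≤ A) →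
      (∀ κ, ρ ≤ ‖κ‖ → m κ = 0) → ∀ x,
      ‖(((2 * Real.pi) ^ (-(d : ℝ)) : ℝ) : ℂ) *
        ∫ κ, Complex.exp (Complex.I * (⟪x, κ⟫ : ℂ)) * m κ * ftransform d f κ‖ₑ
      ≤ ENNReal.ofReal (K * ρ ^ (1 + d / 2 : ℝ)) * sobolevSemi d (-1) f := by
  have : Nonempty (Fin d) := ⟨⟨0, hd⟩⟩
  have hpi := Real.pi_pos
  set c : ℝ := (2 * Real.pi) ^ (-(d : ℝ)) with hc
  have hcpos : 0 < c := by positivity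
  set v : ℝ := (volume (Metric.ball (0 : Ed d) 1)).toReal with hv
  have hvv : volume (Metric.ball (0 : Ed d) 1) = ENNReal.ofReal v :=
    (ENNReal.ofReal_toReal measure_ball_lt_top.ne).symm
  refine ⟨c ^ (1 / 2 : ℝ) * A * v ^ (1 / 2 : ℝ), by positivity, ?_⟩
  intro f m ρ hρ hmA hm0 x
  set I : ℝ≥0∞ := ∫⁻ κ, (‖κ‖₊ : ℝ≥0∞) ^ (2 * (-1) : ℝ) * (‖ftransform d f κ‖₊ : ℝ≥0∞) ^ (2 : ℕ) with hI
  have hmeas : Measurable (fun κ => ‖ftransform d f κ‖ₑ) := (ft_cont d f).measurable.enorm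
  have step1 : ‖∫ κ, Complex.exp (Complex.I * (⟪x, κ⟫ : ℂ)) * m κ * ftransform d f κ‖ₑ
      ≤ ENNReal.ofReal A * ∫⁻ κ, (((Metric.ball (0 : Ed d) ρ).indicator (fun κ => ‖κ‖ₑ)) *
        (fun κ => ‖κ‖ₑ⁻¹ * ‖ftransform d f κ‖ₑ)) κ := by
    refine (enorm_integral_le_lintegral_enorm _).trans ?_
    rw [← lintegral_const_mul' _ _ ENNReal.ofReal_ne_top]
    refine lintegral_mono_ae ?_
    have h0 : ∀ᵐ κ : Ed d, κ ≠ 0 := by rw [ae_iff]; simp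
    filter_upwards [h0] with κ hκ
    rw [enorm_mul, enorm_mul, Pi.mul_apply]
    have he : ‖Complex.exp (Complex.I * (⟪x, κ⟫ : ℂ))‖ₑ = 1 := by
      rw [← ofReal_norm, mul_comm, Complex.norm_exp_ofReal_mul_I, ENNReal.ofReal_one]
    rw [he, one_mul]
    by_cases hb : ‖κ‖ < ρ
    · rw [Set.indicator_of_mem (by simpa using hb), ← mul_assoc (‖κ‖ₑ),
        ENNReal.mul_inv_cancel (by simpa using hκ) enorm_ne_top, one_mul]
      gcongr
      rw [← ofReal_norm]
      exact ENNReal.ofReal_le_ofReal (hmA κ)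
    · rw [hm0 κ (not_lt.mp hb)]; simp
  have step2 := ENNReal.lintegral_mul_le_Lp_mul_Lq (volume : Measure (Ed d)) Real.HolderConjugate.two_two
    (f := (Metric.ball (0 : Ed d) ρ).indicator (fun κ => ‖κ‖ₑ))
    (g := fun κ => ‖κ‖ₑ⁻¹ * ‖ftransform d f κ‖ₑ)
    (measurable_enorm.indicator measurableSet_ball).aemeasurable
    (measurable_enorm.inv.mul hmeas).aemeasurable
  have step3 : ∫⁻ κ : Ed d, (Metric.ball (0 : Ed d) ρ).indicator (fun κ => ‖κ‖ₑ) κ ^ (2 : ℝ)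
      ≤ ENNReal.ofReal (ρ ^ (2 + d : ℝ) * v) := by
    calc _ ≤ ∫⁻ κ : Ed d, (Metric.ball (0 : Ed d) ρ).indicator (fun _ => ENNReal.ofReal (ρ ^ 2)) κ := by
          refine lintegral_mono fun κ => ?_
          by_cases hb : κ ∈ Metric.ball (0 : Ed d) ρ
          · rw [Set.indicator_of_mem hb, Set.indicator_of_mem hb, ← ofReal_norm,
              ENNReal.ofReal_rpow_of_nonneg (norm_nonneg _) (by norm_num)]
            refine ENNReal.ofReal_le_ofReal ?_
            rw [Real.rpow_two]
            have : ‖κ‖ < ρ := by simpa using hb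
            gcongr
          · rw [Set.indicator_of_notMem hb, Set.indicator_of_notMem hb]; simp
      _ = _ := by
          rw [lintegral_indicator measurableSet_ball, setLIntegral_const,
            Measure.addHaar_ball _ _ hρ.le, hvv, finrank_euclideanSpace_fin,
            ← ENNReal.ofReal_mul (by positivity), ← ENNReal.ofReal_mul (by positivity),
            Real.rpow_add hρ, Real.rpow_two, Real.rpow_natCast, mul_assoc]
  have step4 : ∫⁻ κ : Ed d, (‖κ‖ₑ⁻¹ * ‖ftransform d f κ‖ₑ) ^ (2 : ℝ) = I := by
    rw [hI]
    refine lintegral_congr fun κ => ?_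
    rw [ENNReal.mul_rpow_of_nonneg _ _ (by norm_num), ENNReal.rpow_two (‖ftransform d f κ‖ₑ),
      ENNReal.inv_rpow, ← ENNReal.rpow_neg, mul_neg_one]
    rfl
  rw [step4] at step2
  rw [enorm_mul, sobolevSemi, ← hc, ← hI]
  have hce : ‖((c : ℝ) : ℂ)‖ₑ = ENNReal.ofReal (c ^ (1 / 2 : ℝ)) * ENNReal.ofReal c ^ (1 / 2 : ℝ) := by
    rw [← ofReal_norm, Complex.norm_real, Real.norm_of_nonneg hcpos.le,
      ENNReal.ofReal_rpow_of_nonneg hcpos.le (by norm_num), ← ENNReal.ofReal_mul (by positivity),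
      ← Real.rpow_add hcpos]
    norm_num
  rw [hce, ENNReal.mul_rpow_of_nonneg _ _ (by norm_num)]
  have hV : ENNReal.ofReal (ρ ^ (2 + d : ℝ) * v) ^ (1 / 2 : ℝ)
      = ENNReal.ofReal (ρ ^ (1 + d / 2 : ℝ) * v ^ (1 / 2 : ℝ)) := by
    rw [ENNReal.ofReal_rpow_of_nonneg (by positivity) (by norm_num),
      Real.mul_rpow (by positivity) (by positivity), ← Real.rpow_mul hρ.le]
    congr 3; ring
  calc _ ≤ ENNReal.ofReal (c ^ (1 / 2 : ℝ)) * ENNReal.ofReal c ^ (1 / 2 : ℝ) *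
        (ENNReal.ofReal A * (ENNReal.ofReal (ρ ^ (2 + d : ℝ) * v) ^ (1 / 2 : ℝ) * I ^ (1 / 2 : ℝ))) := by
        gcongr
        refine step1.trans ?_
        gcongr
        refine step2.trans ?_
        gcongr
    _ = (ENNReal.ofReal (c ^ (1 / 2 : ℝ)) * ENNReal.ofReal A * ENNReal.ofReal (ρ ^ (1 + d / 2 : ℝ) * v ^ (1 / 2 : ℝ)))
          * (ENNReal.ofReal c ^ (1 / 2 : ℝ) * I ^ (1 / 2 : ℝ)) := by
        rw [hV]; ring
    _ = _ := by
        rw [← ENNReal.ofReal_mul (by positivity), ← ENNReal.ofReal_mul (by positivity)]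
        congr 2; ring

lemma split_bound (d : ℕ) (hd : 1 ≤ d) (r : ℝ) (hr0 : 0 < r) (hr1 : r < 1)
    (a : Ed d → ℂ) (ha : IsSymbol0 d a) :
    ∃ K₁ K₂ : ℝ, 0 ≤ K₁ ∧ 0 ≤ K₂ ∧ ∀ f : SchwartzMap (Ed d) ℂ, sobolevSemi d (-1) f ≠ ⊤ →
      ∀ H : ℝ, 0 ≤ H → (∀ x y, ‖f x - f y‖ ≤ H * ‖x - y‖ ^ r) → ∀ x (R : ℝ), 0 < R →
      ‖symbOp d a f x‖ ≤ K₁ * R ^ (1 + d / 2 : ℝ) * (sobolevSemi d (-1) f).toReal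
        + K₂ * R ^ (-r) * H := by
  have hpi := Real.pi_pos
  obtain ⟨A, hA, haA⟩ := symbol_bdd d a ha
  have hameas := symbol_meas d hd a ha
  let χ : ContDiffBump (0 : Ed d) := ⟨1, 2, by norm_num, by norm_num⟩
  obtain ⟨M, hM⟩ := exists_M d a ha χ
  have hM0 : M 0 = 0 := by rw [hM]; simp
  obtain ⟨B, hB, hhigh⟩ := high_bound d r hr0 hr1 M hM0
  obtain ⟨K, hK, hlow⟩ := low_bound d hd A hA
  set q : ℝ := 2 ^ (-r) with hq
  have hq0 : 0 ≤ q := by positivity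
  have hq1 : q < 1 := Real.rpow_lt_one_of_one_lt_of_neg (by norm_num) (by linarith)
  have hq2 : 0 ≤ (1 - q)⁻¹ := inv_nonneg.mpr (by linarith)
  refine ⟨K * (4 * Real.pi) ^ (1 + d / 2 : ℝ), B * (1 - q)⁻¹, by positivity, by positivity, ?_⟩
  intro f hS H hH hfH x R hR
  set c : ℂ := (((2 * Real.pi) ^ (-(d : ℝ)) : ℝ) : ℂ) with hc
  let F : ℝ → Ed d → ℂ := fun l κ =>
    Complex.exp (Complex.I * (⟪x, κ⟫ : ℂ)) * (a κ * (χ ((2 * Real.pi * l)⁻¹ • κ) : ℂ)) * ftransform d f κ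
  let T : ℝ → ℂ := fun l => c * ∫ κ, F l κ
  have hχ1 : ∀ η, ‖(χ η : ℂ)‖ ≤ 1 := by
    intro η
    rw [Complex.norm_real, Real.norm_of_nonneg χ.nonneg]; exact χ.le_one
  have hnm : ∀ l κ, ‖a κ * (χ ((2 * Real.pi * l)⁻¹ • κ) : ℂ)‖ ≤ A := by
    intro l κ
    rw [norm_mul]
    calc _ ≤ A * 1 := by gcongr; exacts [haA κ, hχ1 _]
      _ = A := mul_one A
  have hexp : ∀ κ : Ed d, ‖Complex.exp (Complex.I * (⟪x, κ⟫ : ℂ))‖ = 1 := by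
    intro κ; rw [mul_comm, Complex.norm_exp_ofReal_mul_I]
  have hFn : ∀ l κ, ‖F l κ‖ ≤ A * ‖ftransform d f κ‖ := by
    intro l κ
    simp only [F]
    rw [norm_mul, norm_mul, hexp, one_mul]
    gcongr
    exact hnm l κ
  have hFm : ∀ l, AEStronglyMeasurable (F l) (volume : Measure (Ed d)) := by
    intro l
    refine AEStronglyMeasurable.mul (AEStronglyMeasurable.mul ?_ (hameas.mul ?_))
      (ft_cont d f).aestronglyMeasurable
    · refine Continuous.aestronglyMeasurable ?_
      fun_prop
    · refine Continuous.aestronglyMeasurable ?_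
      exact Complex.continuous_ofReal.comp (χ.continuous.comp (continuous_const_smul _))
  have hbi : Integrable (fun κ => A * ‖ftransform d f κ‖) := (ft_int d f).norm.const_mul A
  have hFi : ∀ l, Integrable (F l) := fun l =>
    Integrable.mono' hbi (hFm l) (Filter.Eventually.of_forall (hFn l))
  have hT0 : ‖T R‖ ≤ K * (4 * Real.pi) ^ (1 + d / 2 : ℝ) * R ^ (1 + d / 2 : ℝ) *
      (sobolevSemi d (-1) f).toReal := by
    have h := hlow f (fun κ => a κ * (χ ((2 * Real.pi * R)⁻¹ • κ) : ℂ)) (4 * Real.pi * R)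
      (by positivity) (hnm R) (by
        intro κ hκ
        have : χ ((2 * Real.pi * R)⁻¹ • κ) = 0 := by
          apply χ.zero_of_le_dist
          rw [dist_zero_right, norm_smul, Real.norm_of_nonneg (by positivity), inv_mul_eq_div,
            le_div_iff₀ (by positivity)]
          change 2 * (2 * Real.pi * R) ≤ ‖κ‖
          linarith
        simp only [this]
        simp) x
    have h' := ENNReal.toReal_mono (ENNReal.mul_ne_top ENNReal.ofReal_ne_top hS) h
    rw [toReal_enorm, ENNReal.toReal_mul, ENNReal.toReal_ofReal (by positivity),
      Real.mul_rpow (by positivity) hR.le, ← mul_assoc] at h'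
    exact h'
  have hstep : ∀ l : ℝ, 0 < l → ‖T (2 * l) - T l‖ ≤ B * l ^ (-r) * H := by
    intro l hl
    have h := hhigh f f.integrable H hH hfH x l hl
    have e : T (2 * l) - T l = c * ∫ κ, Complex.exp (Complex.I * (⟪x, κ⟫ : ℂ)) *
        M ((2 * Real.pi * l)⁻¹ • κ) * ftransform d f κ := by
      simp only [T]
      rw [← mul_sub, ← integral_sub (hFi _) (hFi _)]
      congr 2
      ext κ
      simp only [F]
      rw [hM]
      have e1 : (2 : ℝ)⁻¹ • (2 * Real.pi * l)⁻¹ • κ = (2 * Real.pi * (2 * l))⁻¹ • κ := by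
        rw [smul_smul]; congr 1; field_simp
      rw [e1]
      by_cases hκ : κ = 0
      · subst hκ; simp
      · rw [ha.2 _ κ (by positivity : 0 < (2 * Real.pi * l)⁻¹) hκ]
        push_cast
        ring
    rw [e]; exact h
  have hind : ∀ n : ℕ, ‖T (2 ^ n * R)‖ ≤ ‖T R‖ + B * R ^ (-r) * H * ∑ k ∈ Finset.range n, q ^ k := by
    intro n
    induction n with
    | zero => simp
    | succ n ih =>
      have h := hstep (2 ^ n * R) (by positivity)
      have e : (2 ^ n * R) ^ (-r) = R ^ (-r) * q ^ n := by
        rw [Real.mul_rpow (by positivity) hR.le, hq, ← Real.rpow_natCast, ← Real.rpow_natCast,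
          ← Real.rpow_mul (by norm_num), ← Real.rpow_mul (by norm_num), mul_comm (n : ℝ)]
        ring
      rw [e] at h
      have e2 : (2 : ℝ) ^ (n + 1) * R = 2 * (2 ^ n * R) := by ring
      rw [e2, Finset.sum_range_succ]
      have := norm_le_norm_add_norm_sub' (T (2 * (2 ^ n * R))) (T (2 ^ n * R))
      linarith
  have hbd : ∀ n : ℕ, ‖T (2 ^ n * R)‖ ≤ ‖T R‖ + B * R ^ (-r) * H * (1 - q)⁻¹ := by
    intro n
    refine (hind n).trans ?_
    gcongr
    rw [← tsum_geometric_of_lt_one hq0 hq1]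
    exact (summable_geometric_of_lt_one hq0 hq1).sum_le_tsum _ (fun k _ => by positivity)
  have hlim : Filter.Tendsto (fun n : ℕ => T (2 ^ n * R)) Filter.atTop (nhds (symbOp d a f x)) := by
    rw [symbOp, ← hc]
    refine Filter.Tendsto.const_mul c ?_
    refine tendsto_integral_of_dominated_convergence (fun κ => A * ‖ftransform d f κ‖)
      (fun n => hFm _) hbi (fun n => Filter.Eventually.of_forall (hFn _))
      (Filter.Eventually.of_forall fun κ => ?_)
    have h1 : Filter.Tendsto (fun n : ℕ => (2 * Real.pi * (2 ^ n * R))⁻¹ • κ) Filter.atTop (nhds 0) := by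
      have : Filter.Tendsto (fun n : ℕ => (2 * Real.pi * (2 ^ n * R))⁻¹) Filter.atTop (nhds 0) := by
        refine Filter.Tendsto.inv_tendsto_atTop ?_
        refine Filter.Tendsto.const_mul_atTop (by positivity) ?_
        exact (tendsto_pow_atTop_atTop_of_one_lt (by norm_num)).atTop_mul_const hR
      simpa using this.smul_const κ
    have h2 : ∀ᶠ n : ℕ in Filter.atTop, χ ((2 * Real.pi * (2 ^ n * R))⁻¹ • κ) = 1 :=
      h1.eventually χ.eventuallyEq_one
    refine tendsto_const_nhds.congr' ?_
    filter_upwards [h2] with n hn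
    simp only [F]
    rw [hn]; simp
  have hfin : ‖symbOp d a f x‖ ≤ ‖T R‖ + B * R ^ (-r) * H * (1 - q)⁻¹ :=
    le_of_tendsto hlim.norm (Filter.Eventually.of_forall hbd)
  calc _ ≤ _ := hfin
    _ ≤ K * (4 * Real.pi) ^ (1 + d / 2 : ℝ) * R ^ (1 + d / 2 : ℝ) *
      (sobolevSemi d (-1) f).toReal + B * R ^ (-r) * H * (1 - q)⁻¹ := by gcongr
    _ = _ := by ring

lemma symbOp_zero (d : ℕ) (hd : 1 ≤ d) (a : Ed d → ℂ) (f : SchwartzMap (Ed d) ℂ)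
    (hS : sobolevSemi d (-1) f = 0) (x : Ed d) : symbOp d a f x = 0 := by
  have hpi := Real.pi_pos
  have : Nonempty (Fin d) := ⟨⟨0, hd⟩⟩
  rw [sobolevSemi, ENNReal.rpow_eq_zero_iff_of_pos (by norm_num), mul_eq_zero] at hS
  have h1 := hS.resolve_left (by
    rw [ENNReal.ofReal_eq_zero, not_le]; positivity)
  have hmeas : Measurable (fun κ => ‖ftransform d f κ‖ₑ) := (ft_cont d f).measurable.enorm
  replace h1 := (lintegral_eq_zero_iff (μ := (volume : Measure (Ed d)))
    (f := fun κ => ‖κ‖ₑ ^ (2 * (-1) : ℝ) * ‖ftransform d f κ‖ₑ ^ (2 : ℕ))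
    ((measurable_enorm.pow_const _).mul (hmeas.pow_const _))).1 h1
  rw [symbOp, integral_eq_zero_of_ae, mul_zero]
  have h0 : ∀ᵐ κ : Ed d, κ ≠ 0 := by rw [ae_iff]; simp
  filter_upwards [h1] with κ h
  have h2 : ftransform d f κ = 0 := by
    simp only [Pi.zero_apply, mul_eq_zero] at h
    rcases h with h | h
    · exfalso
      rw [ENNReal.rpow_eq_zero_iff] at h
      rcases h with h | h
      · norm_num at h
      · exact enorm_ne_top h.1
    · simpa using h
  simp [h2]

/-- For a symbol `a ∈ S⁰_{ph}`, `0 < r < 1`, and `γ = r/(r + 1 + d/2)`,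
one has `‖𝔞[f]‖_∞ ≤ C [f]_{−1}^{γ} {f}_r^{1−γ}` for Schwartz `f` with `[f]_{−1} < ∞`. -/
theorem stmt6 (d : ℕ) (hd : 1 ≤ d) (r : ℝ) (hr0 : 0 < r) (hr1 : r < 1)
    (a : Ed d → ℂ) (ha : IsSymbol0 d a) :
    ∃ C : ℝ, 0 < C ∧ ∀ f : SchwartzMap (Ed d) ℂ,
      sobolevSemi d (-1) ⇑f ≠ ⊤ →
      (⨆ x, (‖symbOp d a (⇑f) x‖₊ : ℝ≥0∞))
        ≤ ENNReal.ofReal C *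
            sobolevSemi d (-1) ⇑f ^ (r / (r + 1 + d / 2)) *
            holderSemi d r ⇑f ^ (1 - r / (r + 1 + d / 2)) := by
  have hs : (0 : ℝ) < 1 + d / 2 := by positivity
  have hden : r + 1 + (d : ℝ) / 2 = r + (1 + d / 2) := by ring
  rw [hden]
  have hγ0 : 0 < r / (r + (1 + (d : ℝ) / 2)) := by positivity
  have hγ1 : 0 < 1 - r / (r + (1 + (d : ℝ) / 2)) := by
    rw [sub_pos, div_lt_one (by positivity)]; linarith
  obtain ⟨K₁, K₂, hK₁, hK₂, hb⟩ := split_bound d hd r hr0 hr1 a ha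
  refine ⟨K₁ + K₂ + 1, by positivity, fun f hS => iSup_le fun x => ?_⟩
  by_cases hS0 : sobolevSemi d (-1) f = 0
  · rw [symbOp_zero d hd a f hS0 x]; simp
  by_cases hH : holderSemi d r f = ⊤
  · rw [hH, ENNReal.top_rpow_of_pos hγ1, ENNReal.mul_top]
    · exact le_top
    · refine mul_ne_zero ?_ ?_
      · rw [ne_eq, ENNReal.ofReal_eq_zero, not_le]; positivity
      · rw [ne_eq, ENNReal.rpow_eq_zero_iff_of_pos hγ0]; exact hS0
  have hhold : ∀ x y, ‖f x - f y‖ ≤ (holderSemi d r f).toReal * ‖x - y‖ ^ r := by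
    intro x y
    by_cases hxy : x = y
    · subst hxy
      rw [sub_self, norm_zero]; positivity
    have h1 : (‖f x - f y‖₊ : ℝ≥0∞) / (‖x - y‖₊ : ℝ≥0∞) ^ r ≤ holderSemi d r f :=
      le_iSup₂_of_le (f := fun x y => (‖f x - f y‖₊ : ℝ≥0∞) / (‖x - y‖₊ : ℝ≥0∞) ^ r) x y le_rfl
    have hn : (‖x - y‖₊ : ℝ≥0∞) ≠ 0 := by simpa [sub_eq_zero] using hxy
    have h2 : (‖x - y‖₊ : ℝ≥0∞) ^ r ≠ 0 := by
      rw [ne_eq, ENNReal.rpow_eq_zero_iff_of_pos hr0]; exact hn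
    have h3 : (‖x - y‖₊ : ℝ≥0∞) ^ r ≠ ⊤ := ENNReal.rpow_ne_top_of_nonneg hr0.le ENNReal.coe_ne_top
    rw [ENNReal.div_le_iff h2 h3] at h1
    have h4 := ENNReal.toReal_mono (ENNReal.mul_ne_top hH h3) h1
    rw [ENNReal.toReal_mul, ← ENNReal.toReal_rpow] at h4
    simpa using h4
  have hfin := optimize _ _ _ K₁ K₂ r (1 + (d : ℝ) / 2) ENNReal.toReal_nonneg ENNReal.toReal_nonneg
    hK₁ hK₂ hr0 hs (fun R hR => hb f hS _ ENNReal.toReal_nonneg hhold x R hR)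
  have hfin2 := ENNReal.ofReal_le_ofReal hfin
  rw [ofReal_norm, ENNReal.ofReal_mul (by positivity), ENNReal.ofReal_mul (by positivity),
    ENNReal.toReal_rpow, ENNReal.toReal_rpow,
    ENNReal.ofReal_toReal (ENNReal.rpow_ne_top_of_nonneg hγ0.le hS),
    ENNReal.ofReal_toReal (ENNReal.rpow_ne_top_of_nonneg hγ1.le hH)] at hfin2
  rw [mul_assoc]
  refine hfin2.trans ?_
  gcongr ENNReal.ofReal ?_ * _
  linarith
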